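/- arXiv:math/0005188 — 8 statements merged into one kernel-verified Lean document; each statement's English description precedes it below -/
import Mathlib

section
/- Let U ⊆ E be an open convex set and let a : E → E be a vector field with ContDiffOn ℝ 1 a U. Then the following are equivalent: (i) for every closed C¹ loop γ in U, the circulation ∮_γ a = ∫ t in (0:ℝ)..1, ⟪a (γ t), deriv γ t⟫ equals 0; (ii) for every x ∈ U and all i j : Fin n, ∂_i a_j x = ∂_j a_i x (skew closedness, i.e. the Jacobian of a is symmetric on U). -/
open MeasureTheory RealInnerProductSpace

section OneForms

variable {E : Type*} [NormedAddCommGroup E] [NormedSpace ℝ E]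

/-- An exact one-form has zero circulation along closed loops. -/
theorem circulation_eq_zero_of_hasFDerivAt {U : Set E} {ω : E → E →L[ℝ] ℝ}
    (hω : ContinuousOn ω U) {f : E → ℝ} (hf : ∀ x ∈ U, HasFDerivAt f (ω x) x)
    {γ : ℝ → E} (hγ : ContDiff ℝ 1 γ) (hloop : γ 0 = γ 1)
    (hγU : ∀ t ∈ Set.Icc (0 : ℝ) 1, γ t ∈ U) :
    ∫ t in (0 : ℝ)..1, ω (γ t) (deriv γ t) = 0 := by
  have hderiv : ∀ t ∈ Set.uIcc (0 : ℝ) 1,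
      HasDerivAt (fun t => f (γ t)) (ω (γ t) (deriv γ t)) t := by
    intro t ht
    rw [Set.uIcc_of_le zero_le_one] at ht
    exact (hf _ (hγU t ht)).comp_hasDerivAt t
      (hγ.differentiable one_ne_zero t).hasDerivAt
  have hcont : ContinuousOn (fun t => ω (γ t) (deriv γ t)) (Set.uIcc 0 1) := by
    rw [Set.uIcc_of_le zero_le_one]
    exact (hω.comp hγ.continuous.continuousOn hγU).clm_apply
      (hγ.continuous_deriv le_rfl).continuousOn
  rw [intervalIntegral.integral_eq_sub_of_hasDerivAt hderiv hcont.intervalIntegrable, hloop,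
    sub_self]

/-- The ellipse with conjugate semi-axes `u` and `v`, parametrized by `[0, 1]`. -/
noncomputable def ellipseLoop (u v : E) (t : ℝ) : E :=
  Real.cos (2 * Real.pi * t) • u + Real.sin (2 * Real.pi * t) • v

/-- The velocity of `ellipseLoop u v`. -/
noncomputable def ellipseVelocity (u v : E) (t : ℝ) : E :=
  (2 * Real.pi) • (-Real.sin (2 * Real.pi * t) • u + Real.cos (2 * Real.pi * t) • v)

theorem hasDerivAt_cos_two_pi_mul (t : ℝ) :
    HasDerivAt (fun t => Real.cos (2 * Real.pi * t))
      (-Real.sin (2 * Real.pi * t) * (2 * Real.pi)) t := by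
  simpa using ((hasDerivAt_id t).const_mul (2 * Real.pi)).cos

theorem hasDerivAt_sin_two_pi_mul (t : ℝ) :
    HasDerivAt (fun t => Real.sin (2 * Real.pi * t))
      (Real.cos (2 * Real.pi * t) * (2 * Real.pi)) t := by
  simpa using ((hasDerivAt_id t).const_mul (2 * Real.pi)).sin

theorem hasDerivAt_ellipseLoop (u v : E) (t : ℝ) :
    HasDerivAt (ellipseLoop u v) (ellipseVelocity u v t) t := by
  refine (((hasDerivAt_cos_two_pi_mul t).smul_const u).add
    ((hasDerivAt_sin_two_pi_mul t).smul_const v)).congr_deriv ?_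
  simp only [ellipseVelocity]
  module

theorem contDiff_ellipseLoop (u v : E) : ContDiff ℝ 1 (ellipseLoop u v) := by
  unfold ellipseLoop
  fun_prop

theorem continuous_ellipseVelocity (u v : E) : Continuous (ellipseVelocity u v) := by
  unfold ellipseVelocity
  fun_prop

theorem norm_ellipseLoop_le (u v : E) (t : ℝ) : ‖ellipseLoop u v t‖ ≤ ‖u‖ + ‖v‖ := by
  refine (norm_add_le _ _).trans (add_le_add ?_ ?_) <;> rw [norm_smul, Real.norm_eq_abs]
  · exact mul_le_of_le_one_left (norm_nonneg _) (Real.abs_cos_le_one _)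
  · exact mul_le_of_le_one_left (norm_nonneg _) (Real.abs_sin_le_one _)

theorem norm_ellipseVelocity_le (u v : E) (t : ℝ) :
    ‖ellipseVelocity u v t‖ ≤ 2 * Real.pi * (‖u‖ + ‖v‖) := by
  rw [ellipseVelocity, norm_smul, Real.norm_of_nonneg Real.two_pi_pos.le]
  refine mul_le_mul_of_nonneg_left ?_ Real.two_pi_pos.le
  refine (norm_add_le _ _).trans (add_le_add ?_ ?_) <;> rw [norm_smul, Real.norm_eq_abs]
  · rw [abs_neg]
    exact mul_le_of_le_one_left (norm_nonneg _) (Real.abs_sin_le_one _)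
  · exact mul_le_of_le_one_left (norm_nonneg _) (Real.abs_cos_le_one _)

/-- The circulation of an affine one-form along a scaled ellipse is the antisymmetric part of its
linear part times the area. -/
theorem integral_affine_ellipse (φ : E →L[ℝ] ℝ) (A : E →L[ℝ] E →L[ℝ] ℝ) (u v : E) (r : ℝ) :
    ∫ t in (0 : ℝ)..1, (φ + A (r • ellipseLoop u v t)) (r • ellipseVelocity u v t) =
      r ^ 2 * (Real.pi * (A u v - A v u)) := by
  have hderiv : ∀ t ∈ Set.uIcc (0 : ℝ) 1, HasDerivAt
      (fun t => r * (Real.cos (2 * Real.pi * t) * φ u + Real.sin (2 * Real.pi * t) * φ v) +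
        r ^ 2 * (Real.pi * (A u v - A v u) * t +
          Real.sin (2 * Real.pi * t) * Real.cos (2 * Real.pi * t) * ((A u v + A v u) / 2) +
          Real.sin (2 * Real.pi * t) * Real.sin (2 * Real.pi * t) * ((A v v - A u u) / 2)))
      ((φ + A (r • ellipseLoop u v t)) (r • ellipseVelocity u v t)) t := by
    intro t _
    have hc := hasDerivAt_cos_two_pi_mul t
    have hs := hasDerivAt_sin_two_pi_mul t
    refine ((((hc.mul_const (φ u)).add (hs.mul_const (φ v))).const_mul r).add
      (((((hasDerivAt_id t).const_mul (Real.pi * (A u v - A v u))).add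
        ((hs.mul hc).mul_const ((A u v + A v u) / 2))).add
        ((hs.mul hs).mul_const ((A v v - A u u) / 2))).const_mul (r ^ 2))).congr_deriv ?_
    simp only [ellipseLoop, ellipseVelocity, map_add, map_smul, add_apply,
      smul_apply, smul_eq_mul]
    linear_combination (-r ^ 2 * Real.pi * (A u v - A v u)) *
      Real.sin_sq_add_cos_sq (2 * Real.pi * t)
  have hcont : Continuous fun t =>
      (φ + A (r • ellipseLoop u v t)) (r • ellipseVelocity u v t) := by
    have h₁ := (contDiff_ellipseLoop u v).continuous
    have h₂ := continuous_ellipseVelocity u v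
    fun_prop
  rw [intervalIntegral.integral_eq_sub_of_hasDerivAt hderiv (hcont.intervalIntegrable _ _)]
  simp

/-- A one-form whose circulation vanishes along every closed loop has symmetric derivative. -/
theorem symmetric_of_circulation_eq_zero {U : Set E} (hU : IsOpen U) {ω : E → E →L[ℝ] ℝ}
    (hω : ContinuousOn ω U)
    (hcirc : ∀ γ : ℝ → E, ContDiff ℝ 1 γ → γ 0 = γ 1 → (∀ t ∈ Set.Icc (0 : ℝ) 1, γ t ∈ U) →
      ∫ t in (0 : ℝ)..1, ω (γ t) (deriv γ t) = 0)
    {x : E} (hx : x ∈ U) {A : E →L[ℝ] E →L[ℝ] ℝ} (hA : HasFDerivAt ω A x) (u v : E) :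
    A u v = A v u := by
  set M := ‖u‖ + ‖v‖
  have hM0 : 0 ≤ M := by positivity
  have key : ∀ ε > 0, |Real.pi * (A u v - A v u)| ≤ ε * (2 * Real.pi * M ^ 2) := by
    intro ε hε
    obtain ⟨δ, hδ, hball⟩ := Metric.eventually_nhds_iff_ball.1
      ((hA.isLittleO.def hε).and (hU.mem_nhds hx))
    set r := δ / (M + 1) with hr
    have hr0 : 0 < r := by positivity
    have hrM : r * M < δ := by
      rw [hr, div_mul_eq_mul_div, div_lt_iff₀ (by positivity)]
      nlinarith
    have hnorm : ∀ t, ‖r • ellipseLoop u v t‖ ≤ r * M := fun t => by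
      rw [norm_smul, Real.norm_of_nonneg hr0.le]
      exact mul_le_mul_of_nonneg_left (norm_ellipseLoop_le u v t) hr0.le
    have hmem : ∀ t, x + r • ellipseLoop u v t ∈ Metric.ball x δ := fun t => by
      rw [mem_ball_iff_norm, add_sub_cancel_left]
      exact (hnorm t).trans_lt hrM
    have hγ : ContDiff ℝ 1 fun t => x + r • ellipseLoop u v t :=
      contDiff_const.add ((contDiff_ellipseLoop u v).const_smul r)
    have hderiv : ∀ t, deriv (fun t => x + r • ellipseLoop u v t) t =
        r • ellipseVelocity u v t :=
      fun t => (((hasDerivAt_ellipseLoop u v t).const_smul r).const_add x).deriv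
    have hzero := hcirc _ hγ (by simp [ellipseLoop]) fun t _ => (hball _ (hmem t)).2
    simp only [hderiv] at hzero
    have hlin := integral_affine_ellipse (ω x) A u v r
    have h₁ := (contDiff_ellipseLoop u v).continuous
    have h₂ := continuous_ellipseVelocity u v
    have hint₁ : IntervalIntegrable
        (fun t => ω (x + r • ellipseLoop u v t) (r • ellipseVelocity u v t)) volume 0 1 := by
      refine Continuous.intervalIntegrable ?_ _ _
      exact (hω.comp_continuous hγ.continuous fun t => (hball _ (hmem t)).2).clm_apply
        (h₂.const_smul r)
    have hint₂ : IntervalIntegrable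
        (fun t => (ω x + A (r • ellipseLoop u v t)) (r • ellipseVelocity u v t)) volume 0 1 := by
      refine Continuous.intervalIntegrable ?_ _ _
      fun_prop
    have hdiff := intervalIntegral.integral_sub hint₁ hint₂
    rw [hzero, hlin, zero_sub] at hdiff
    have hbound := intervalIntegral.norm_integral_le_of_norm_le_const
      (a := (0 : ℝ)) (b := 1) (C := ε * (r * M) * (r * (2 * Real.pi * M)))
      (f := fun t => ω (x + r • ellipseLoop u v t) (r • ellipseVelocity u v t) -
        (ω x + A (r • ellipseLoop u v t)) (r • ellipseVelocity u v t)) (by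
      intro t _
      rw [← sub_apply]
      refine (ContinuousLinearMap.le_opNorm _ _).trans (mul_le_mul ?_ ?_ (norm_nonneg _)
        (by positivity))
      · have h := (hball _ (hmem t)).1
        rw [add_sub_cancel_left, sub_sub] at h
        exact h.trans (mul_le_mul_of_nonneg_left (hnorm t) hε.le)
      · rw [norm_smul, Real.norm_of_nonneg hr0.le]
        exact mul_le_mul_of_nonneg_left (norm_ellipseVelocity_le u v t) hr0.le)
    rw [hdiff, norm_neg, Real.norm_eq_abs, abs_mul, abs_of_pos (pow_pos hr0 2), sub_zero, abs_one,
      mul_one] at hbound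
    refine le_of_mul_le_mul_left (hbound.trans_eq ?_) (pow_pos hr0 2)
    ring
  have hle : |Real.pi * (A u v - A v u)| ≤ 0 := by
    refine le_of_forall_pos_le_add fun η hη => ?_
    have hK : 0 ≤ 2 * Real.pi * M ^ 2 := by positivity
    refine (key (η / (2 * Real.pi * M ^ 2 + 1)) (by positivity)).trans ?_
    rw [zero_add, div_mul_eq_mul_div, div_le_iff₀ (by positivity)]
    nlinarith
  have hprod := abs_nonpos_iff.1 hle
  exact sub_eq_zero.1 ((mul_eq_zero.1 hprod).resolve_left Real.pi_ne_zero)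

end OneForms

/-- A continuous bilinear form on Euclidean space which is symmetric on the standard basis is
symmetric. -/
theorem EuclideanSpace.bilin_symmetric_of_single {ι : Type*} [Fintype ι] [DecidableEq ι]
    (A : EuclideanSpace ℝ ι →L[ℝ] EuclideanSpace ℝ ι →L[ℝ] ℝ)
    (h : ∀ i j, A (EuclideanSpace.single i 1) (EuclideanSpace.single j 1) =
      A (EuclideanSpace.single j 1) (EuclideanSpace.single i 1))
    (u v : EuclideanSpace ℝ ι) : A u v = A v u := by
  have hflip : A.toLinearMap₁₂ = A.flip.toLinearMap₁₂ := by
    refine (EuclideanSpace.basisFun ι ℝ).toBasis.ext fun i =>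
      (EuclideanSpace.basisFun ι ℝ).toBasis.ext fun j => ?_
    simpa using h i j
  exact LinearMap.congr_fun₂ hflip u v

theorem stmt_0 (n : ℕ) (hn : 1 ≤ n) (U : Set (EuclideanSpace ℝ (Fin n)))
    (hUopen : IsOpen U) (hUconv : Convex ℝ U)
    (a : EuclideanSpace ℝ (Fin n) → EuclideanSpace ℝ (Fin n))
    (ha : ContDiffOn ℝ 1 a U) :
    (∀ γ : ℝ → EuclideanSpace ℝ (Fin n), ContDiff ℝ 1 γ → γ 0 = γ 1 →
        (∀ t ∈ Set.Icc (0:ℝ) 1, γ t ∈ U) →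
        ∫ t in (0:ℝ)..1, ⟪a (γ t), deriv γ t⟫ = 0) ↔
      (∀ x ∈ U, ∀ i j : Fin n,
        fderiv ℝ (fun y => ⟪a y, EuclideanSpace.single j (1:ℝ)⟫) x
            (EuclideanSpace.single i (1:ℝ)) =
          fderiv ℝ (fun y => ⟪a y, EuclideanSpace.single i (1:ℝ)⟫) x
            (EuclideanSpace.single j (1:ℝ))) := by
  set ω : EuclideanSpace ℝ (Fin n) → EuclideanSpace ℝ (Fin n) →L[ℝ] ℝ :=
    fun y => innerSL ℝ (a y)
  have hdiff : DifferentiableOn ℝ ω U := fun x hx =>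
    (innerSL ℝ).differentiableAt.comp_differentiableWithinAt x
      (ha.differentiableOn one_ne_zero x hx)
  have hderiv : ∀ x ∈ U, HasFDerivAt ω (fderiv ℝ ω x) x := fun x hx =>
    (hdiff.differentiableAt (hUopen.mem_nhds hx)).hasFDerivAt
  have hcomp : ∀ x ∈ U, ∀ u v, fderiv ℝ (fun y => ⟪a y, v⟫) x u = fderiv ℝ ω x u v := by
    intro x hx u v
    have h := (hderiv x hx).clm_apply (hasFDerivAt_const v x)
    have heq : (fun y => ⟪a y, v⟫) = fun y => ω y v := rfl
    rw [heq, h.fderiv]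
    simp
  constructor
  · intro hcirc x hx i j
    rw [hcomp x hx, hcomp x hx]
    exact symmetric_of_circulation_eq_zero hUopen hdiff.continuousOn hcirc hx (hderiv x hx) _ _
  · intro hsymm γ hγ hloop hγU
    obtain ⟨f, hf⟩ := hUconv.exists_forall_hasFDerivAt_of_fderiv_symmetric hUopen hdiff
      fun x hx => EuclideanSpace.bilin_symmetric_of_single _ fun i j => by
        rw [← hcomp x hx, ← hcomp x hx]
        exact hsymm x hx i j
    exact circulation_eq_zero_of_hasFDerivAt hdiff.continuousOn hf hγ hloop hγU
end

section
/- Let U ⊆ ℝ × ℝ be open and let a₁ a₂ : ℝ × ℝ → ℝ be functions with ContDiffOn ℝ 1 a₁ U and ContDiffOn ℝ 1 a₂ U. Then the following are equivalent: (i) for all p₁ < q₁ and p₂ < q₂ with Set.Icc (p₁, p₂) (q₁, q₂) ⊆ U, the circulation around the boundary of the rectangle vanishes: (∫ t in p₁..q₁, a₁ (t, p₂)) + (∫ t in p₂..q₂, a₂ (q₁, t)) − (∫ t in p₁..q₁, a₁ (t, q₂)) − (∫ t in p₂..q₂, a₂ (p₁, t)) = 0; (ii) for every x ∈ U, ∂₁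 a₂ x = ∂₂ a₁ x. -/
open MeasureTheory

/-- **Green's theorem** on a rectangle contained in an open set where the field is `C¹`. -/
lemma circulation_eq_setIntegral_curl {U : Set (ℝ × ℝ)} (hU : IsOpen U) {a₁ a₂ : ℝ × ℝ → ℝ}
    (ha₁ : ContDiffOn ℝ 1 a₁ U) (ha₂ : ContDiffOn ℝ 1 a₂ U) {p₁ q₁ p₂ q₂ : ℝ}
    (h₁ : p₁ ≤ q₁) (h₂ : p₂ ≤ q₂) (hR : Set.Icc ((p₁, p₂) : ℝ × ℝ) (q₁, q₂) ⊆ U) :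
    (∫ t in p₁..q₁, a₁ (t, p₂)) + (∫ t in p₂..q₂, a₂ (q₁, t)) -
        (∫ t in p₁..q₁, a₁ (t, q₂)) - (∫ t in p₂..q₂, a₂ (p₁, t)) =
      ∫ x in Set.Icc ((p₁, p₂) : ℝ × ℝ) (q₁, q₂),
        (fderiv ℝ a₂ x (1, 0) - fderiv ℝ a₁ x (0, 1)) := by
  have hderiv {f : ℝ × ℝ → ℝ} (hf : ContDiffOn ℝ 1 f U) :
      ∀ x ∈ Set.Ioo p₁ q₁ ×ˢ Set.Ioo p₂ q₂, HasFDerivAt f (fderiv ℝ f x) x := by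
    rintro x ⟨hx₁, hx₂⟩
    have hx : x ∈ U := hR ⟨⟨hx₁.1.le, hx₂.1.le⟩, ⟨hx₁.2.le, hx₂.2.le⟩⟩
    exact ((hf.differentiableOn one_ne_zero).differentiableAt (hU.mem_nhds hx)).hasFDerivAt
  have hint : IntegrableOn (fun x ↦ fderiv ℝ a₂ x (1, 0) + (-fderiv ℝ a₁ x) (0, 1))
      (Set.Icc ((p₁, p₂) : ℝ × ℝ) (q₁, q₂)) := by
    refine ContinuousOn.integrableOn_compact isCompact_Icc (ContinuousOn.mono ?_ hR)
    exact ((ha₂.continuousOn_fderiv_of_isOpen hU le_rfl).clm_apply continuousOn_const).add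
      ((ha₁.continuousOn_fderiv_of_isOpen hU le_rfl).neg.clm_apply continuousOn_const)
  have key := integral_divergence_prod_Icc_of_hasFDerivAt_of_le a₂ (fun x ↦ -a₁ x)
    (fderiv ℝ a₂) (fun x ↦ -fderiv ℝ a₁ x) (p₁, p₂) (q₁, q₂) ⟨h₁, h₂⟩
    (ha₂.continuousOn.mono hR) (ha₁.continuousOn.neg.mono hR) (hderiv ha₂)
    (fun x hx ↦ (hderiv ha₁ x hx).neg) hint
  simp only [neg_apply, ← sub_eq_add_neg, intervalIntegral.integral_neg] at key
  rw [key]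
  ring

/-- A continuous function on an open subset of the plane whose integral over every rectangle
vanishes is nowhere positive. -/
lemma nonpos_of_setIntegral_Icc_eq_zero {U : Set (ℝ × ℝ)} (hU : IsOpen U) {h : ℝ × ℝ → ℝ}
    (hc : ContinuousOn h U)
    (hz : ∀ p₁ q₁ p₂ q₂ : ℝ, p₁ < q₁ → p₂ < q₂ → Set.Icc ((p₁, p₂) : ℝ × ℝ) (q₁, q₂) ⊆ U →
      ∫ x in Set.Icc ((p₁, p₂) : ℝ × ℝ) (q₁, q₂), h x = 0)
    {x : ℝ × ℝ} (hx : x ∈ U) : h x ≤ 0 := by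
  by_contra! hpos
  have hnhds : {y | y ∈ U ∧ 0 < h y} ∈ nhds x :=
    Filter.inter_mem (hU.mem_nhds hx)
      ((hc.continuousAt (hU.mem_nhds hx)).eventually (lt_mem_nhds hpos))
  obtain ⟨ε, hε, hball⟩ := Metric.nhds_basis_closedBall.mem_iff.mp hnhds
  have hIcc : Set.Icc ((x.1 - ε, x.2 - ε) : ℝ × ℝ) (x.1 + ε, x.2 + ε) =
      Metric.closedBall x ε := by
    rw [← Set.Icc_prod_Icc, ← Real.closedBall_eq_Icc, ← Real.closedBall_eq_Icc,
      closedBall_prod_same]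
  have hzero := hz (x.1 - ε) (x.1 + ε) (x.2 - ε) (x.2 + ε) (by linarith) (by linarith)
    (hIcc ▸ fun y hy ↦ (hball hy).1)
  rw [hIcc] at hzero
  refine hzero.not_gt ?_
  rw [setIntegral_pos_iff_support_of_nonneg_ae]
  · have hsupp : Metric.closedBall x ε ⊆ Function.support h := fun y hy ↦ (hball hy).2.ne'
    rw [Set.inter_eq_right.mpr hsupp]
    exact Metric.measure_closedBall_pos volume x hε
  · exact (ae_restrict_mem Metric.isClosed_closedBall.measurableSet).mono
      fun y hy ↦ (hball hy).2.le
  · exact (hc.mono fun y hy ↦ (hball hy).1).integrableOn_compact (isCompact_closedBall x ε)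

theorem stmt_1 (U : Set (ℝ × ℝ)) (hU : IsOpen U) (a₁ a₂ : ℝ × ℝ → ℝ)
    (ha₁ : ContDiffOn ℝ 1 a₁ U) (ha₂ : ContDiffOn ℝ 1 a₂ U) :
    (∀ p₁ q₁ p₂ q₂ : ℝ, p₁ < q₁ → p₂ < q₂ →
        Set.Icc ((p₁, p₂) : ℝ × ℝ) (q₁, q₂) ⊆ U →
        (∫ t in p₁..q₁, a₁ (t, p₂)) + (∫ t in p₂..q₂, a₂ (q₁, t)) -
            (∫ t in p₁..q₁, a₁ (t, q₂)) - (∫ t in p₂..q₂, a₂ (p₁, t)) = 0) ↔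
      (∀ x ∈ U, fderiv ℝ a₂ x (1, 0) = fderiv ℝ a₁ x (0, 1)) := by
  constructor
  · intro hcirc x hx
    have hcont : ContinuousOn (fun x ↦ fderiv ℝ a₂ x (1, 0) - fderiv ℝ a₁ x (0, 1)) U :=
      ((ha₂.continuousOn_fderiv_of_isOpen hU le_rfl).clm_apply continuousOn_const).sub
        ((ha₁.continuousOn_fderiv_of_isOpen hU le_rfl).clm_apply continuousOn_const)
    have hcurl (p₁ q₁ p₂ q₂ : ℝ) (h₁ : p₁ < q₁) (h₂ : p₂ < q₂)
        (hR : Set.Icc ((p₁, p₂) : ℝ × ℝ) (q₁, q₂) ⊆ U) :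
        ∫ x in Set.Icc ((p₁, p₂) : ℝ × ℝ) (q₁, q₂),
          (fderiv ℝ a₂ x (1, 0) - fderiv ℝ a₁ x (0, 1)) = 0 := by
      rw [← circulation_eq_setIntegral_curl hU ha₁ ha₂ h₁.le h₂.le hR]
      exact hcirc p₁ q₁ p₂ q₂ h₁ h₂ hR
    have hle := nonpos_of_setIntegral_Icc_eq_zero hU hcont hcurl hx
    have hge := nonpos_of_setIntegral_Icc_eq_zero hU hcont.neg
      (fun p₁ q₁ p₂ q₂ h₁ h₂ hR ↦ by
        simp only [Pi.neg_apply, integral_neg, hcurl p₁ q₁ p₂ q₂ h₁ h₂ hR, neg_zero]) hx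
    simp only [Pi.neg_apply] at hge
    linarith
  · intro hcurl p₁ q₁ p₂ q₂ h₁ h₂ hR
    rw [circulation_eq_setIntegral_curl hU ha₁ ha₂ h₁.le h₂.le hR]
    exact setIntegral_eq_zero_of_forall_eq_zero fun x hx ↦ sub_eq_zero.mpr (hcurl x (hR hx))
end

section
/- Let U ⊆ ℝ × ℝ be open and let a₁ a₂ : ℝ × ℝ → ℝ be functions with ContDiffOn ℝ 1 a₁ U and ContDiffOn ℝ 1 a₂ U. Then for all p₁ ≤ q₁ and p₂ ≤ q₂ with Set.Icc (p₁, p₂) (q₁, q₂) ⊆ U, the circulation around the boundary of the rectangle equals the integral of the rotation over the rectangle (Green's theorem): (∫ t in p₁..q₁, a₁ (t, p₂)) + (∫ t in p₂..q₂, a₂ (q₁, t)) − (∫ t in p₁..q₁, a₁ (t, q₂)) − (∫ t in p₂..q₂, a₂ (p₁, t)) = ∫ x in Set.Icc (p₁, p₂) (q₁, q₂), (∂₁ a₂ x − ∂₂ a₁ x). -/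
open MeasureTheory

theorem stmt_2 (U : Set (ℝ × ℝ)) (hU : IsOpen U) (a₁ a₂ : ℝ × ℝ → ℝ)
    (ha₁ : ContDiffOn ℝ 1 a₁ U) (ha₂ : ContDiffOn ℝ 1 a₂ U) :
    ∀ p₁ q₁ p₂ q₂ : ℝ, p₁ ≤ q₁ → p₂ ≤ q₂ →
      Set.Icc ((p₁, p₂) : ℝ × ℝ) (q₁, q₂) ⊆ U →
      (∫ t in p₁..q₁, a₁ (t, p₂)) + (∫ t in p₂..q₂, a₂ (q₁, t)) -
          (∫ t in p₁..q₁, a₁ (t, q₂)) - (∫ t in p₂..q₂, a₂ (p₁, t)) =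
        ∫ x in Set.Icc ((p₁, p₂) : ℝ × ℝ) (q₁, q₂),
          (fderiv ℝ a₂ x (1, 0) - fderiv ℝ a₁ x (0, 1)) := by
  intro p₁ q₁ p₂ q₂ h₁ h₂ hsub
  have hasFDerivAt_of_mem : ∀ {a : ℝ × ℝ → ℝ}, ContDiffOn ℝ 1 a U →
      ∀ x ∈ Set.Ioo p₁ q₁ ×ˢ Set.Ioo p₂ q₂, HasFDerivAt a (fderiv ℝ a x) x := by
    intro a ha x hx
    have hxU : x ∈ U := hsub ⟨⟨hx.1.1.le, hx.2.1.le⟩, ⟨hx.1.2.le, hx.2.2.le⟩⟩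
    exact ((ha.differentiableOn one_ne_zero).differentiableAt (hU.mem_nhds hxU)).hasFDerivAt
  have continuousOn_partial : ∀ {a : ℝ × ℝ → ℝ} (v : ℝ × ℝ), ContDiffOn ℝ 1 a U →
      ContinuousOn (fun x => fderiv ℝ a x v) (Set.Icc (p₁, p₂) (q₁, q₂)) := fun v ha =>
    ((ha.continuousOn_fderiv_of_isOpen hU le_rfl).mono hsub).clm_apply continuousOn_const
  have hint : IntegrableOn (fun x => fderiv ℝ a₂ x (1, 0) + (-fderiv ℝ a₁ x) (0, 1))
      (Set.Icc (p₁, p₂) (q₁, q₂)) :=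
    ((continuousOn_partial (1, 0) ha₂).add
      (continuousOn_partial (0, 1) ha₁).neg).integrableOn_compact isCompact_Icc
  have hdiv := integral_divergence_prod_Icc_of_hasFDerivAt_of_le a₂ (-a₁)
    (fderiv ℝ a₂) (fun x => -fderiv ℝ a₁ x) (p₁, p₂) (q₁, q₂) ⟨h₁, h₂⟩
    (ha₂.continuousOn.mono hsub) (ha₁.continuousOn.mono hsub).neg
    (hasFDerivAt_of_mem ha₂) (fun x hx => (hasFDerivAt_of_mem ha₁ x hx).neg) hint
  simp only [neg_apply, Pi.neg_apply,
    intervalIntegral.integral_neg, ← sub_eq_add_neg] at hdiv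
  rw [hdiv]
  ring
end

section
/- Let U ⊆ (Fin (n+1) → ℝ) be open and let a : (Fin (n+1) → ℝ) → (Fin (n+1) → ℝ) be a vector field with ContDiffOn ℝ 1 a U. Then the following are equivalent: (i) for all p q : Fin (n+1) → ℝ with p i < q i for every i and Set.Icc p q ⊆ U, the outward flux of a through the boundary of the box Set.Icc p q vanishes: flux(a,p,q) = 0; (ii) for every x ∈ U, div a x = 0 (direct closedness). -/
open MeasureTheory

/-- A continuous function on an open set whose integrals over all nondegenerate boxes contained in
the set vanish is nonpositive there. -/
theorem nonpos_of_forall_setIntegral_Icc_eq_zero {ι : Type*} [Fintype ι] {U : Set (ι → ℝ)}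
    (hU : IsOpen U) {g : (ι → ℝ) → ℝ} (hg : ContinuousOn g U)
    (h : ∀ p q : ι → ℝ, (∀ i, p i < q i) → Set.Icc p q ⊆ U → ∫ y in Set.Icc p q, g y = 0)
    {x : ι → ℝ} (hx : x ∈ U) : g x ≤ 0 := by
  by_contra! hpos
  have hUx : U ∈ nhds x := hU.mem_nhds hx
  have hev : ∀ᶠ y in nhds x, y ∈ U ∧ g x / 2 < g y :=
    Filter.Eventually.and hUx
      ((hg.continuousAt hUx).eventually (lt_mem_nhds (half_lt_self hpos)))
  obtain ⟨ε, hε, hball⟩ := Metric.nhds_basis_closedBall.eventually_iff.1 hev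
  have hsub : ∀ y ∈ Set.Icc (fun i => x i - ε) (fun i => x i + ε),
      y ∈ U ∧ g x / 2 < g y := by
    intro y hy
    refine hball ((dist_pi_le_iff hε.le).2 fun i => ?_)
    rw [Real.dist_eq, abs_le]
    constructor <;> linarith [hy.1 i, hy.2 i]
  have hzero := h _ _ (fun i => by linarith) fun y hy => (hsub y hy).1
  have hgi : IntegrableOn g (Set.Icc (fun i => x i - ε) (fun i => x i + ε)) :=
    (hg.mono fun y hy => (hsub y hy).1).integrableOn_compact isCompact_Icc
  have hle := setIntegral_ge_of_const_le_real measurableSet_Icc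
    isCompact_Icc.measure_lt_top.ne (fun y hy => (hsub y hy).2.le) hgi
  have hvol : 0 < volume.real (Set.Icc (fun i => x i - ε) (fun i => x i + ε)) := by
    rw [measureReal_def, Real.volume_Icc_pi_toReal fun i => by linarith]
    exact Finset.prod_pos fun i _ => by linarith
  have := mul_pos (half_pos hpos) hvol
  linarith

/-- A continuous function on an open set vanishes there iff its integrals over all nondegenerate
boxes contained in the set vanish. -/
theorem forall_setIntegral_Icc_eq_zero_iff {ι : Type*} [Fintype ι] {U : Set (ι → ℝ)}
    (hU : IsOpen U) {g : (ι → ℝ) → ℝ} (hg : ContinuousOn g U) :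
    (∀ p q : ι → ℝ, (∀ i, p i < q i) → Set.Icc p q ⊆ U → ∫ y in Set.Icc p q, g y = 0) ↔
      ∀ x ∈ U, g x = 0 := by
  refine ⟨fun h x hx => le_antisymm (nonpos_of_forall_setIntegral_Icc_eq_zero hU hg h hx) ?_,
    fun h p q _ hpq => setIntegral_eq_zero_of_forall_eq_zero fun y hy => h y (hpq hy)⟩
  refine neg_nonpos.1 (nonpos_of_forall_setIntegral_Icc_eq_zero hU hg.neg
    (fun p q hlt hpq => ?_) hx)
  simp only [Pi.neg_apply, integral_neg, h p q hlt hpq, neg_zero]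

theorem stmt_3 (n : ℕ) (U : Set (Fin (n + 1) → ℝ)) (hU : IsOpen U)
    (a : (Fin (n + 1) → ℝ) → (Fin (n + 1) → ℝ)) (ha : ContDiffOn ℝ 1 a U) :
    (∀ p q : Fin (n + 1) → ℝ, (∀ i, p i < q i) → Set.Icc p q ⊆ U →
        (∑ i : Fin (n + 1),
          ((∫ y in Set.Icc (p ∘ i.succAbove) (q ∘ i.succAbove), a (i.insertNth (q i) y) i) -
            (∫ y in Set.Icc (p ∘ i.succAbove) (q ∘ i.succAbove), a (i.insertNth (p i) y) i))) = 0) ↔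
      (∀ x ∈ U, (∑ i : Fin (n + 1), fderiv ℝ (fun z => a z i) x (Pi.single i 1)) = 0) := by
  have hcomp : ∀ i, ContDiffOn ℝ 1 (fun z => a z i) U := contDiffOn_pi.1 ha
  have hdiv : ContinuousOn
      (fun x => ∑ i : Fin (n + 1), fderiv ℝ (fun z => a z i) x (Pi.single i 1)) U :=
    continuousOn_finsetSum _ fun i _ =>
      ((hcomp i).continuousOn_fderiv_of_isOpen hU le_rfl).clm_apply continuousOn_const
  rw [← forall_setIntegral_Icc_eq_zero_iff hU hdiv]
  refine forall₄_congr fun p q hlt hpq => ?_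
  rw [integral_divergence_of_hasFDerivAt_off_countable' p q (fun i => (hlt i).le)
    (fun i z => a z i) (fun i x => fderiv ℝ (fun z => a z i) x) ∅ Set.countable_empty
    (fun i => (hcomp i).continuousOn.mono hpq) (fun x hx i => ?_)
    ((hdiv.mono hpq).integrableOn_compact isCompact_Icc)]
  have hxU : x ∈ U := hpq ⟨fun j => (hx.1 j trivial).1.le, fun j => (hx.1 j trivial).2.le⟩
  exact (((hcomp i).contDiffAt (hU.mem_nhds hxU)).differentiableAt one_ne_zero).hasFDerivAt
end

section
/- Let U ⊆ E be open and let φ : E → ℝ satisfy ContDiffOn ℝ 2 φ U. Then the following are equivalent: (i) for every test function ψ on U, ∫ x in U, ⟪∇φ x, ∇ψ x⟫ = 0; (ii) φ is harmonic on U, i.e. Δφ x = 0 for every x ∈ U. -/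
open MeasureTheory RealInnerProductSpace

/-- The product of a function continuous on an open set `U` and a continuous function compactly
supported in `U` is integrable. -/
theorem ContinuousOn.integrable_mul_of_tsupport_subset {X : Type*} [TopologicalSpace X]
    [MeasurableSpace X] [OpensMeasurableSpace X] {μ : Measure X}
    [IsFiniteMeasureOnCompacts μ] {U : Set X} (hU : IsOpen U) {a b : X → ℝ}
    (ha : ContinuousOn a U) (hb : Continuous b) (hbc : HasCompactSupport b)
    (hbU : tsupport b ⊆ U) : Integrable (fun x => a x * b x) μ := by
  refine Continuous.integrable_of_hasCompactSupport ?_ hbc.mul_left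
  exact (ha.mul hb.continuousOn).continuous_of_tsupport_subset hU
    ((tsupport_mul_subset_right (f := a) (g := b)).trans hbU)

/-- The inner product of two gradients in coordinates. -/
theorem EuclideanSpace.inner_gradient_gradient {n : ℕ} (f g : EuclideanSpace ℝ (Fin n) → ℝ)
    (x : EuclideanSpace ℝ (Fin n)) :
    ⟪gradient f x, gradient g x⟫ =
      ∑ i, fderiv ℝ f x (EuclideanSpace.single i (1 : ℝ)) *
        fderiv ℝ g x (EuclideanSpace.single i (1 : ℝ)) := by
  rw [← (EuclideanSpace.basisFun (Fin n) ℝ).sum_inner_mul_inner]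
  refine Finset.sum_congr rfl fun i _ => ?_
  rw [EuclideanSpace.basisFun_apply, real_inner_comm (gradient g x)]
  simp [gradient]

section Green

variable {n : ℕ} {U : Set (EuclideanSpace ℝ (Fin n))} {φ ψ : EuclideanSpace ℝ (Fin n) → ℝ}

theorem ContDiffOn.contDiffOn_fderiv_apply_const (hU : IsOpen U) (hφ : ContDiffOn ℝ 2 φ U)
    (v : EuclideanSpace ℝ (Fin n)) : ContDiffOn ℝ 1 (fun y => fderiv ℝ φ y v) U :=
  (hφ.fderiv_of_isOpen hU (by norm_num)).clm_apply contDiffOn_const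

theorem ContDiffOn.continuousOn_fderiv_fderiv_apply_const (hU : IsOpen U)
    (hφ : ContDiffOn ℝ 2 φ U) (v : EuclideanSpace ℝ (Fin n)) :
    ContinuousOn (fun x => fderiv ℝ (fun y => fderiv ℝ φ y v) x v) U :=
  ((hφ.contDiffOn_fderiv_apply_const hU v).continuousOn_fderiv_of_isOpen hU le_rfl).clm_apply
    continuousOn_const

/-- **Green's first identity** against a `C^1` function compactly supported in `U`. -/
theorem ContDiffOn.setIntegral_inner_gradient_eq_neg (hU : IsOpen U) (hφ : ContDiffOn ℝ 2 φ U)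
    (hψ : ContDiff ℝ 1 ψ) (hψc : HasCompactSupport ψ) (hψU : tsupport ψ ⊆ U) :
    ∫ x in U, ⟪gradient φ x, gradient ψ x⟫ =
      -∫ x, ψ x * ∑ i : Fin n,
          fderiv ℝ (fun y => fderiv ℝ φ y (EuclideanSpace.single i (1 : ℝ))) x
            (EuclideanSpace.single i (1 : ℝ)) := by
  have hd : ∀ v, tsupport (fun x => fderiv ℝ ψ x v) ⊆ tsupport ψ := tsupport_fderiv_apply_subset ℝ
  have hψ' : ∀ v, Continuous fun x => fderiv ℝ ψ x v := fun v =>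
    (hψ.continuous_fderiv one_ne_zero).clm_apply continuous_const
  have hdc : ∀ v, HasCompactSupport fun x => fderiv ℝ ψ x v := fun v =>
    hψc.fderiv_apply ℝ v
  have h1 : ∀ v, Integrable fun x => fderiv ℝ φ x v * fderiv ℝ ψ x v := fun v =>
    (hφ.contDiffOn_fderiv_apply_const hU v).continuousOn.integrable_mul_of_tsupport_subset hU
      (hψ' v) (hdc v) ((hd v).trans hψU)
  have h2 : ∀ v, Integrable fun x => fderiv ℝ (fun y => fderiv ℝ φ y v) x v * ψ x := fun v =>
    (hφ.continuousOn_fderiv_fderiv_apply_const hU v).integrable_mul_of_tsupport_subset hU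
      hψ.continuous hψc hψU
  have h3 : ∀ v, Integrable fun x => fderiv ℝ φ x v * ψ x := fun v =>
    (hφ.contDiffOn_fderiv_apply_const hU v).continuousOn.integrable_mul_of_tsupport_subset hU
      hψ.continuous hψc hψU
  rw [setIntegral_eq_integral_of_forall_compl_eq_zero]
  · simp_rw [EuclideanSpace.inner_gradient_gradient, Finset.mul_sum, mul_comm (ψ _)]
    rw [integral_finsetSum _ fun i _ => h1 _, integral_finsetSum _ fun i _ => h2 _,
      ← Finset.sum_neg_distrib]
    refine Finset.sum_congr rfl fun i _ => ?_
    refine integral_mul_fderiv_eq_neg_fderiv_mul_of_integrable (h2 _) (h1 _) (h3 _)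
      (fun x hx => ?_) fun x _ => hψ.differentiable one_ne_zero x
    exact ((hφ.contDiffOn_fderiv_apply_const hU _).differentiableOn one_ne_zero).differentiableAt
      (hU.mem_nhds (hψU hx))
  · intro x hx
    have : fderiv ℝ ψ x = 0 := fderiv_of_notMem_tsupport ℝ fun h => hx (hψU h)
    simp [gradient, this]

end Green

theorem stmt_4 (n : ℕ) (hn : 1 ≤ n) (U : Set (EuclideanSpace ℝ (Fin n))) (hU : IsOpen U)
    (φ : EuclideanSpace ℝ (Fin n) → ℝ) (hφ : ContDiffOn ℝ 2 φ U) :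
    (∀ ψ : EuclideanSpace ℝ (Fin n) → ℝ, ContDiff ℝ (⊤ : ℕ∞) ψ → HasCompactSupport ψ →
        tsupport ψ ⊆ U →
        ∫ x in U, ⟪gradient φ x, gradient ψ x⟫ = 0) ↔
      (∀ x ∈ U, (∑ i : Fin n,
          fderiv ℝ (fun y => fderiv ℝ φ y (EuclideanSpace.single i (1:ℝ))) x
            (EuclideanSpace.single i (1:ℝ))) = 0) := by
  have hle : (1 : WithTop ℕ∞) ≤ ((⊤ : ℕ∞) : WithTop ℕ∞) := by exact_mod_cast le_top
  constructor
  · intro h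
    have hcont := continuousOn_finsetSum Finset.univ fun (i : Fin n) _ =>
      hφ.continuousOn_fderiv_fderiv_apply_const hU (EuclideanSpace.single i (1 : ℝ))
    have hae := hU.ae_eq_zero_of_integral_contDiff_smul_eq_zero (μ := volume)
      (hcont.locallyIntegrableOn hU.measurableSet) fun ψ hψ hψc hψU => by
        have := h ψ hψ hψc hψU
        rw [hφ.setIntegral_inner_gradient_eq_neg hU (hψ.of_le hle) hψc hψU, neg_eq_zero] at this
        exact this
    exact Measure.eqOn_open_of_ae_eq ((ae_restrict_iff' hU.measurableSet).2 hae) hU hcont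
      continuousOn_const
  · intro h ψ hψ hψc hψU
    rw [hφ.setIntegral_inner_gradient_eq_neg hU (hψ.of_le hle) hψc hψU, neg_eq_zero]
    refine integral_eq_zero_of_ae (.of_forall fun x => ?_)
    by_cases hx : x ∈ U
    · simp [h x hx]
    · simp [image_eq_zero_of_notMem_tsupport fun hx' => hx (hψU hx')]
end

section
/- Let U ⊆ E be an open convex set and let a : E → E be a vector field with ContDiffOn ℝ 1 a U. Then a admits a potential on U, i.e. there exists φ : E → ℝ with HasGradientAt φ (a x) x for every x ∈ U, if and only if the Jacobian of a is symmetric on U, i.e. for every x ∈ U and all i j : Fin n, ∂_i a_j x = ∂_j a_i x. -/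
open MeasureTheory RealInnerProductSpace

section

variable {E : Type*} [NormedAddCommGroup E] [InnerProductSpace ℝ E] {a : E → E} {x : E}

lemma fderiv_inner_const_apply (ha : DifferentiableAt ℝ a x) (v w : E) :
    fderiv ℝ (fun y => ⟪a y, w⟫) x v = ⟪fderiv ℝ a x v, w⟫ := by
  simp [fderiv_inner_apply ℝ ha (differentiableAt_const w)]

/-- The derivative of the `1`-form dual to a vector field `a`. -/
lemma hasFDerivAt_innerSL_comp (ha : DifferentiableAt ℝ a x) :
    HasFDerivAt (fun y => innerSL ℝ (a y)) ((innerSL ℝ).comp (fderiv ℝ a x)) x :=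
  (innerSL ℝ).hasFDerivAt.comp x ha.hasFDerivAt

variable [CompleteSpace E]

/-- The Jacobian of a differentiable gradient field is symmetric. -/
lemma inner_fderiv_symm_of_hasGradientAt {φ : E → ℝ}
    (hφ : ∀ᶠ y in nhds x, HasGradientAt φ (a y) y) (ha : DifferentiableAt ℝ a x) (v w : E) :
    ⟪fderiv ℝ a x v, w⟫ = ⟪fderiv ℝ a x w, v⟫ :=
  second_derivative_symmetric_of_eventually (𝕜 := ℝ) (f' := fun y => innerSL ℝ (a y))
    (hφ.mono fun _ hy => hy.hasFDerivAt) (hasFDerivAt_innerSL_comp ha) v w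

/-- **Poincaré lemma** for vector fields: a differentiable field with symmetric Jacobian on an
open convex set has a potential there. -/
lemma exists_hasGradientAt_of_inner_fderiv_symm {U : Set E} (hUconv : Convex ℝ U)
    (hUopen : IsOpen U) (ha : DifferentiableOn ℝ a U)
    (hsymm : ∀ x ∈ U, ∀ v w, ⟪fderiv ℝ a x v, w⟫ = ⟪fderiv ℝ a x w, v⟫) :
    ∃ φ : E → ℝ, ∀ x ∈ U, HasGradientAt φ (a x) x := by
  have hd x (hx : x ∈ U) := hasFDerivAt_innerSL_comp (ha.differentiableAt (hUopen.mem_nhds hx))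
  obtain ⟨φ, hφ⟩ := hUconv.exists_forall_hasFDerivAt_of_fderiv_symmetric hUopen
    (ω := fun y => innerSL ℝ (a y))
    (fun x hx => (hd x hx).differentiableAt.differentiableWithinAt)
    (fun x hx v w => by rw [(hd x hx).fderiv]; exact hsymm x hx v w)
  exact ⟨φ, fun x hx => hasGradientAt_iff_hasFDerivAt.2 (hφ x hx)⟩

end

lemma EuclideanSpace.inner_apply_symm_of_single {ι : Type*} [Fintype ι] [DecidableEq ι]
    (L : EuclideanSpace ℝ ι →L[ℝ] EuclideanSpace ℝ ι)
    (hL : ∀ i j, ⟪L (EuclideanSpace.single i (1 : ℝ)), EuclideanSpace.single j (1 : ℝ)⟫ =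
      ⟪L (EuclideanSpace.single j (1 : ℝ)), EuclideanSpace.single i (1 : ℝ)⟫)
    (v w : EuclideanSpace ℝ ι) : ⟪L v, w⟫ = ⟪L w, v⟫ := by
  let b := (EuclideanSpace.basisFun ι ℝ).toBasis
  let B : EuclideanSpace ℝ ι →ₗ[ℝ] EuclideanSpace ℝ ι →ₗ[ℝ] ℝ := (innerₗ _).comp L.toLinearMap
  have hB : B = B.flip := LinearMap.ext_basis b b fun i j => by simpa [b, B] using hL i j
  exact LinearMap.congr_fun₂ hB v w

theorem stmt_6 (n : ℕ) (hn : 1 ≤ n) (U : Set (EuclideanSpace ℝ (Fin n)))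
    (hUopen : IsOpen U) (hUconv : Convex ℝ U)
    (a : EuclideanSpace ℝ (Fin n) → EuclideanSpace ℝ (Fin n))
    (ha : ContDiffOn ℝ 1 a U) :
    (∃ φ : EuclideanSpace ℝ (Fin n) → ℝ, ∀ x ∈ U, HasGradientAt φ (a x) x) ↔
      (∀ x ∈ U, ∀ i j : Fin n,
        fderiv ℝ (fun y => ⟪a y, EuclideanSpace.single j (1:ℝ)⟫) x
            (EuclideanSpace.single i (1:ℝ)) =
          fderiv ℝ (fun y => ⟪a y, EuclideanSpace.single i (1:ℝ)⟫) x
            (EuclideanSpace.single j (1:ℝ))) := by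
  have hd x (hx : x ∈ U) : DifferentiableAt ℝ a x :=
    (ha.differentiableOn one_ne_zero).differentiableAt (hUopen.mem_nhds hx)
  constructor
  · rintro ⟨φ, hφ⟩ x hx i j
    rw [fderiv_inner_const_apply (hd x hx), fderiv_inner_const_apply (hd x hx)]
    exact inner_fderiv_symm_of_hasGradientAt
      (Filter.eventually_of_mem (hUopen.mem_nhds hx) hφ) (hd x hx) _ _
  · intro h
    refine exists_hasGradientAt_of_inner_fderiv_symm hUconv hUopen
      (ha.differentiableOn one_ne_zero) fun x hx =>
        EuclideanSpace.inner_apply_symm_of_single _ fun i j => ?_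
    simpa only [fderiv_inner_const_apply (hd x hx)] using h x hx i j
end

section
/- Let U ⊆ E be open and connected, and let a : E → E be a vector field that is ContinuousOn a U and conservative on U, i.e. for every curve γ : ℝ → E with ContDiff ℝ 1 γ, γ 0 = γ 1 and γ t ∈ U for all t ∈ Set.Icc (0:ℝ) 1 one has ∫ t in (0:ℝ)..1, ⟪a (γ t), deriv γ t⟫ = 0. Then a is a gradient field on U: there exists φ : E → ℝ with HasGradientAt φ (a x) x for every x ∈ U. -/
open MeasureTheory RealInnerProductSpace

open Set Filter Topology unitInterval

theorem Path.extend_trans_eq_add_sub {E : Type*} [NormedAddCommGroup E] {x y z : E}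
    (γ : Path x y) (γ' : Path y z) (t : ℝ) :
    (γ.trans γ').extend t = γ.extend (2 * t) + γ'.extend (2 * t - 1) - y := by
  rcases le_total t (1 / 2) with ht | ht
  · rw [Path.extend_trans_of_le_half _ _ ht, γ'.extend_of_le_zero (by linarith),
      add_sub_cancel_right]
  · rw [Path.extend_trans_of_half_le _ _ ht, γ.extend_of_one_le (by linarith),
      add_sub_cancel_left]

section CurveIntegral

variable {E : Type*} [NormedAddCommGroup E] [NormedSpace ℝ E] {U : Set E} {x y z : E}

/-- A path in `U` that is continuously differentiable when extended by constants to `ℝ`. -/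
structure Path.IsC1In (γ : Path x y) (U : Set E) : Prop where
  contDiff : ContDiff ℝ 1 γ.extend
  mem : ∀ t, γ t ∈ U

theorem Path.IsC1In.symm {γ : Path x y} (h : γ.IsC1In U) : γ.symm.IsC1In U where
  contDiff := by
    rw [Path.extend_symm]
    exact h.contDiff.comp (contDiff_const.sub contDiff_id)
  mem t := h.mem (σ t)

theorem Path.IsC1In.trans {γ : Path x y} {γ' : Path y z} (h : γ.IsC1In U) (h' : γ'.IsC1In U) :
    (γ.trans γ').IsC1In U where
  contDiff := by
    rw [funext (γ.extend_trans_eq_add_sub γ')]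
    exact ((h.contDiff.comp (contDiff_const.mul contDiff_id)).add
      (h'.contDiff.comp ((contDiff_const.mul contDiff_id).sub contDiff_const))).sub contDiff_const
  mem t := by
    have ht : (γ.trans γ') t ∈ range γ ∪ range γ' := by
      rw [← Path.trans_range]
      exact mem_range_self t
    rcases ht with ⟨s, hs⟩ | ⟨s, hs⟩
    · exact hs ▸ h.mem s
    · exact hs ▸ h'.mem s

theorem Path.IsC1In.curveIntegrable {γ : Path x y} (h : γ.IsC1In U) {ω : E → E →L[ℝ] ℝ}
    (hω : ContinuousOn ω U) : CurveIntegrable ω γ :=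
  hω.curveIntegrable_of_contDiffOn h.contDiff.contDiffOn h.mem

/-- The straight path from `x` to `y`, reparametrized so that its velocity vanishes to infinite
order at both endpoints. -/
noncomputable def Path.smoothSegment (x y : E) : Path x y where
  toFun t := AffineMap.lineMap x y (Real.smoothTransition t)
  continuous_toFun := AffineMap.lineMap_continuous.comp
    (Real.smoothTransition.continuous.comp continuous_subtype_val)
  source' := by simp
  target' := by simp

theorem Path.extend_smoothSegment (x y : E) (t : ℝ) :
    (Path.smoothSegment x y).extend t = AffineMap.lineMap x y (Real.smoothTransition t) := by
  change AffineMap.lineMap x y (Real.smoothTransition (projIcc (0 : ℝ) 1 zero_le_one t)) = _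
  rw [Real.smoothTransition.projIcc]

theorem Path.isC1In_smoothSegment (h : segment ℝ x y ⊆ U) : (Path.smoothSegment x y).IsC1In U where
  contDiff := by
    rw [funext (Path.extend_smoothSegment x y)]
    simp only [AffineMap.lineMap_apply_module']
    exact (Real.smoothTransition.contDiff.smul contDiff_const).add contDiff_const
  mem t := h (lineMap_mem_segment ℝ x y
    ⟨Real.smoothTransition.nonneg _, Real.smoothTransition.le_one _⟩)

theorem curveIntegral_smoothSegment {ω : E → E →L[ℝ] ℝ} (hω : ContinuousOn ω U)
    (h : segment ℝ x y ⊆ U) :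
    curveIntegral ω (Path.smoothSegment x y) = curveIntegral ω (Path.segment x y) := by
  have hd : Differentiable ℝ Real.smoothTransition :=
    (Real.smoothTransition.contDiff (n := 1)).differentiable one_ne_zero
  have hderiv (t : ℝ) : deriv (Path.smoothSegment x y).extend t =
      deriv Real.smoothTransition t • (y - x) := by
    rw [funext (Path.extend_smoothSegment x y)]
    simp only [AffineMap.lineMap_apply_module']
    exact (((hd t).hasDerivAt.smul_const (y - x)).add_const x).deriv
  have key := intervalIntegral.integral_comp_mul_deriv' (a := 0) (b := 1)
    (f := Real.smoothTransition) (f' := deriv Real.smoothTransition)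
    (g := fun s ↦ ω (AffineMap.lineMap x y s) (y - x)) (fun t _ ↦ (hd t).hasDerivAt)
    ((Real.smoothTransition.contDiff (n := 1)).continuous_deriv le_rfl).continuousOn
    (by
      refine (hω.comp AffineMap.lineMap_continuous.continuousOn ?_).clm_apply continuousOn_const
      rintro _ ⟨t, -, rfl⟩
      exact h (lineMap_mem_segment ℝ x y
        ⟨Real.smoothTransition.nonneg _, Real.smoothTransition.le_one _⟩))
  rw [Real.smoothTransition.zero, Real.smoothTransition.one] at key
  rw [curveIntegral_segment, ← key, curveIntegral_eq_intervalIntegral_deriv]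
  refine intervalIntegral.integral_congr fun t _ ↦ ?_
  simp only [hderiv, Path.extend_smoothSegment, map_smul, smul_eq_mul, Function.comp_apply]
  exact mul_comm _ _

theorem eventually_segment_subset_nhds (hU : IsOpen U) (hx : x ∈ U) :
    ∀ᶠ y in 𝓝 x, segment ℝ x y ⊆ U := by
  obtain ⟨r, hr, hrU⟩ := Metric.isOpen_iff.1 hU x hx
  filter_upwards [Metric.ball_mem_nhds x hr] with y hy
  exact ((convex_ball x r).segment_subset (Metric.mem_ball_self hr) hy).trans hrU

theorem exists_path_isC1In (hU : IsOpen U) (hUc : IsPreconnected U) (hx : x ∈ U) (hy : y ∈ U) :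
    ∃ γ : Path x y, γ.IsC1In U := by
  refine hUc.induction₂ (fun x y ↦ ∃ γ : Path x y, γ.IsC1In U) (fun x hx ↦ ?_)
    (fun _ _ _ _ _ _ ⟨γ, h⟩ ⟨γ', h'⟩ ↦ ⟨γ.trans γ', h.trans h'⟩)
    (fun _ _ _ _ ⟨γ, h⟩ ↦ ⟨γ.symm, h.symm⟩) hx hy
  filter_upwards [nhdsWithin_le_nhds (eventually_segment_subset_nhds hU hx)] with y hxy
  exact ⟨_, Path.isC1In_smoothSegment hxy⟩

/-- A continuous 1-form on a connected open set whose integrals along closed `C¹` paths vanish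
is exact. -/
theorem exists_forall_hasFDerivAt_of_curveIntegral_loop_eq_zero (hU : IsOpen U)
    (hUc : IsConnected U) {ω : E → E →L[ℝ] ℝ} (hω : ContinuousOn ω U)
    (hloop : ∀ (x : E) (γ : Path x x), γ.IsC1In U → curveIntegral ω γ = 0) :
    ∃ f : E → ℝ, ∀ x ∈ U, HasFDerivAt f (ω x) x := by
  obtain ⟨x₀, hx₀⟩ := hUc.nonempty
  choose! f hf using fun y (hy : y ∈ U) ↦ show ∃ c : ℝ, ∃ γ : Path x₀ y,
      γ.IsC1In U ∧ curveIntegral ω γ = c by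
    obtain ⟨γ, hγ⟩ := exists_path_isC1In hU hUc.isPreconnected hx₀ hy
    exact ⟨_, γ, hγ, rfl⟩
  refine ⟨f, fun x hx ↦ ?_⟩
  have hcont : ∀ᶠ z in 𝓝 x, ContinuousAt ω z := by
    filter_upwards [hU.mem_nhds hx] with z hz using hω.continuousAt (hU.mem_nhds hz)
  refine ((HasFDerivAt.curveIntegral_segment_source' hcont).const_add (f x)).congr_of_eventuallyEq ?_
  filter_upwards [eventually_segment_subset_nhds hU hx] with y hxy
  obtain ⟨γ, hγ, hγx⟩ := hf x hx
  obtain ⟨γ', hγ', hγy⟩ := hf y (hxy (right_mem_segment ℝ x y))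
  have hs := Path.isC1In_smoothSegment hxy
  have h := hloop _ _ ((hγ.trans hs).trans hγ'.symm)
  rw [curveIntegral_trans ((hγ.trans hs).curveIntegrable hω) (hγ'.symm.curveIntegrable hω),
    curveIntegral_trans (hγ.curveIntegrable hω) (hs.curveIntegrable hω), curveIntegral_symm,
    curveIntegral_smoothSegment hω hxy, hγx, hγy] at h
  linarith

end CurveIntegral

theorem stmt_9 (n : ℕ) (hn : 1 ≤ n) (U : Set (EuclideanSpace ℝ (Fin n)))
    (hUopen : IsOpen U) (hUconn : IsConnected U)
    (a : EuclideanSpace ℝ (Fin n) → EuclideanSpace ℝ (Fin n))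
    (ha : ContinuousOn a U)
    (hcons : ∀ γ : ℝ → EuclideanSpace ℝ (Fin n), ContDiff ℝ 1 γ → γ 0 = γ 1 →
      (∀ t ∈ Set.Icc (0:ℝ) 1, γ t ∈ U) →
      ∫ t in (0:ℝ)..1, ⟪a (γ t), deriv γ t⟫ = 0) :
    ∃ φ : EuclideanSpace ℝ (Fin n) → ℝ, ∀ x ∈ U, HasGradientAt φ (a x) x := by
  obtain ⟨φ, hφ⟩ := exists_forall_hasFDerivAt_of_curveIntegral_loop_eq_zero hUopen hUconn
    (ω := fun x ↦ innerSL ℝ (a x)) ((innerSL ℝ).continuous.comp_continuousOn ha) fun x γ hγ ↦ by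
      rw [curveIntegral_eq_intervalIntegral_deriv]
      exact hcons γ.extend hγ.contDiff (by simp) fun t _ ↦ hγ.mem _
  exact ⟨φ, fun x hx ↦ hasGradientAt_iff_hasFDerivAt.2 (hφ x hx)⟩
end

section
/- Let U ⊆ E be open, let φ : E → ℝ satisfy ContDiffOn ℝ 1 φ U, let ψ be a test function on U, and set K := tsupport ψ. Then the Dirichlet energy along the variation φ + tψ is differentiable in t at 0 with derivative given by the first variation: HasDerivAt (fun t : ℝ => ∫ x in K, ‖∇φ x + t • ∇ψ x‖^2) (2 * ∫ x in K, ⟪∇φ x, ∇ψ x⟫) 0. -/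
open MeasureTheory RealInnerProductSpace

theorem ContDiffOn.continuousOn_gradient_of_isOpen {F : Type*} [NormedAddCommGroup F]
    [InnerProductSpace ℝ F] [CompleteSpace F] {f : F → ℝ} {U : Set F}
    (hf : ContDiffOn ℝ 1 f U) (hU : IsOpen U) : ContinuousOn (gradient f) U :=
  (InnerProductSpace.toDual ℝ F).symm.continuous.comp_continuousOn
    (hf.continuousOn_fderiv_of_isOpen hU le_rfl)

/-- The energy along an affine variation is a quadratic polynomial in the parameter, so its
derivative at the origin is the linear coefficient. -/
theorem hasDerivAt_setIntegral_norm_add_smul_sq {X F : Type*} [TopologicalSpace X] [T2Space X]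
    [MeasurableSpace X] [OpensMeasurableSpace X] {μ : Measure X} [IsFiniteMeasureOnCompacts μ]
    [NormedAddCommGroup F] [InnerProductSpace ℝ F] {K : Set X} (hK : IsCompact K) {u v : X → F}
    (hu : ContinuousOn u K) (hv : ContinuousOn v K) :
    HasDerivAt (fun t : ℝ => ∫ x in K, ‖u x + t • v x‖ ^ 2 ∂μ)
      (2 * ∫ x in K, ⟪u x, v x⟫ ∂μ) 0 := by
  have huu : IntegrableOn (fun x => ‖u x‖ ^ 2) K μ := (hu.norm.pow 2).integrableOn_compact hK
  have huv : IntegrableOn (fun x => ⟪u x, v x⟫) K μ := (hu.inner hv).integrableOn_compact hK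
  have hvv : IntegrableOn (fun x => ‖v x‖ ^ 2) K μ := (hv.norm.pow 2).integrableOn_compact hK
  have expand : (fun t : ℝ => ∫ x in K, ‖u x + t • v x‖ ^ 2 ∂μ) = fun t : ℝ =>
      (∫ x in K, ‖u x‖ ^ 2 ∂μ) + t * (2 * ∫ x in K, ⟪u x, v x⟫ ∂μ)
        + t ^ 2 * ∫ x in K, ‖v x‖ ^ 2 ∂μ := by
    funext t
    rw [← integral_const_mul, ← integral_const_mul, ← integral_const_mul,
      ← integral_add huu ((huv.const_mul 2).const_mul t),
      ← integral_add (huu.fun_add ((huv.const_mul 2).const_mul t)) (hvv.const_mul (t ^ 2))]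
    congr 1 with x
    rw [norm_add_sq_real, inner_smul_right, norm_smul, mul_pow, Real.norm_eq_abs, sq_abs]
    ring
  rw [expand]
  have := (((hasDerivAt_id (0 : ℝ)).mul_const (2 * ∫ x in K, ⟪u x, v x⟫ ∂μ)).const_add
    (∫ x in K, ‖u x‖ ^ 2 ∂μ)).add
      ((hasDerivAt_pow 2 (0 : ℝ)).mul_const (∫ x in K, ‖v x‖ ^ 2 ∂μ))
  exact this.congr_deriv (by simp)

theorem stmt_10 (n : ℕ) (hn : 1 ≤ n) (U : Set (EuclideanSpace ℝ (Fin n))) (hU : IsOpen U)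
    (φ : EuclideanSpace ℝ (Fin n) → ℝ) (hφ : ContDiffOn ℝ 1 φ U)
    (ψ : EuclideanSpace ℝ (Fin n) → ℝ) (hψ : ContDiff ℝ (⊤ : ℕ∞) ψ)
    (hψc : HasCompactSupport ψ) (hψU : tsupport ψ ⊆ U) :
    HasDerivAt (fun t : ℝ => ∫ x in tsupport ψ, ‖gradient φ x + t • gradient ψ x‖ ^ 2)
      (2 * ∫ x in tsupport ψ, ⟪gradient φ x, gradient ψ x⟫) 0 := by
  have hψ₁ : ContDiffOn ℝ 1 ψ U := (hψ.of_le (mod_cast le_top)).contDiffOn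
  exact hasDerivAt_setIntegral_norm_add_smul_sq hψc
    ((hφ.continuousOn_gradient_of_isOpen hU).mono hψU)
    ((hψ₁.continuousOn_gradient_of_isOpen hU).mono hψU)
end
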